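/- arXiv:2303.03754 — 3 statements merged into one kernel-verified Lean document; each statement's English description precedes it below -/
import Mathlib

section
/- Let δ ∈ ℝ, let τ > 0, and let G : ℝ → ℂ be twice continuously differentiable on [0, τ] with |G(s)| ≤ M₀, |G'(s)| ≤ M₁ and |G''(s)| ≤ M₂ for all s ∈ [0, τ]. Then |(τ/2)·(G(τ) + e^{iτδ} G(0)) − ∫₀^τ e^{i(τ−s)δ} G(s) ds| ≤ (τ³/12)·(M₂ + 2|δ| M₁ + δ² M₀). -/
open Complex

theorem trapezoid_aux (τ C : ℝ) (hτ : 0 < τ) (f f' f'' : ℝ → ℂ)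
    (hf : ∀ s ∈ Set.Icc (0 : ℝ) τ, HasDerivWithinAt f (f' s) (Set.Icc 0 τ) s)
    (hf' : ∀ s ∈ Set.Icc (0 : ℝ) τ, HasDerivWithinAt f' (f'' s) (Set.Icc 0 τ) s)
    (hf'' : ContinuousOn f'' (Set.Icc 0 τ))
    (hb : ∀ s ∈ Set.Icc (0 : ℝ) τ, ‖f'' s‖ ≤ C) :
    ‖(τ / 2 : ℂ) * (f τ + f 0) - ∫ s in (0 : ℝ)..τ, f s‖ ≤ τ ^ 3 / 12 * C := by
  have cf : ContinuousOn f (Set.Icc 0 τ) := fun s hs => (hf s hs).continuousWithinAt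
  have cf' : ContinuousOn f' (Set.Icc 0 τ) := fun s hs => (hf' s hs).continuousWithinAt
  have hu : Set.uIcc 0 τ = Set.Icc 0 τ := Set.uIcc_of_le hτ.le
  have ck : ContinuousOn (fun s : ℝ => ((s : ℂ) * (τ - s) / 2) * f'' s) (Set.Icc 0 τ) := by
    fun_prop
  have i1 : IntervalIntegrable f MeasureTheory.volume 0 τ := by
    apply ContinuousOn.intervalIntegrable; rwa [hu]
  have i2 : IntervalIntegrable (fun s : ℝ => ((s : ℂ) * (τ - s) / 2) * f'' s)
      MeasureTheory.volume 0 τ := by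
    apply ContinuousOn.intervalIntegrable; rwa [hu]
  have key := intervalIntegral.integral_eq_sub_of_hasDerivAt_of_le
    (f := fun s : ℝ => ((s : ℂ) - τ / 2) * f s + ((s : ℂ) * (τ - s) / 2) * f' s)
    (f' := fun s : ℝ => f s + ((s : ℂ) * (τ - s) / 2) * f'' s) hτ.le (by fun_prop)
    (by
      intro s hs
      have hn := Icc_mem_nhds hs.1 hs.2
      have h1 := (hf s (Set.Ioo_subset_Icc_self hs)).hasDerivAt hn
      have h2 := (hf' s (Set.Ioo_subset_Icc_self hs)).hasDerivAt hn
      have h0 : HasDerivAt (fun s : ℝ => (s : ℂ)) 1 s := Complex.ofRealCLM.hasDerivAt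
      have h3 := ((h0.sub_const (τ / 2 : ℂ)).mul h1).add
        (((h0.mul (h0.const_sub (τ : ℂ))).div_const 2).mul h2)
      refine h3.congr_deriv ?_
      simp only [Pi.mul_apply]
      ring)
    (i1.add i2)
  rw [intervalIntegral.integral_add i1 i2] at key
  have e : (τ / 2 : ℂ) * (f τ + f 0) - ∫ s in (0 : ℝ)..τ, f s
      = ∫ s in (0 : ℝ)..τ, ((s : ℂ) * (τ - s) / 2) * f'' s := by
    simp only [Complex.ofReal_zero] at key
    linear_combination -key
  rw [e]
  have hint : ∫ s in (0 : ℝ)..τ, (s * (τ - s) / 2) * C = τ ^ 3 / 12 * C := by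
    rw [intervalIntegral.integral_eq_sub_of_hasDerivAt
      (f := fun s : ℝ => (τ * s ^ 2 / 4 - s ^ 3 / 6) * C)]
    · ring
    · intro s _
      have h := (((((hasDerivAt_id s).pow 2).const_mul τ).div_const 4).sub
        (((hasDerivAt_id s).pow 3).div_const 6)).mul_const C
      refine h.congr_deriv ?_
      simp
      left
      ring
    · exact Continuous.intervalIntegrable (by fun_prop) _ _
  rw [← hint]
  apply intervalIntegral.norm_integral_le_of_norm_le hτ.le
  · refine Filter.Eventually.of_forall fun s hs => ?_
    have hk : ((s : ℂ) * (τ - s) / 2) = ((s * (τ - s) / 2 : ℝ) : ℂ) := by push_cast; ring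
    have hk0 : 0 ≤ s * (τ - s) / 2 := by
      have := mul_nonneg hs.1.le (sub_nonneg.2 hs.2)
      linarith
    rw [norm_mul, hk, Complex.norm_real, Real.norm_of_nonneg hk0]
    exact mul_le_mul_of_nonneg_left (hb s ⟨hs.1.le, hs.2⟩) hk0
  · exact Continuous.intervalIntegrable (by fun_prop) _ _

/-- Single-Fourier-mode local truncation error of the Deuflhard-type exponential
wave integrator: for `G` twice continuously differentiable on `[0, τ]` with
`|G| ≤ M₀`, `|G'| ≤ M₁`, `|G''| ≤ M₂` there,
`|(τ/2)(G(τ) + e^{iτδ}G(0)) − ∫₀^τ e^{i(τ−s)δ} G(s) ds| ≤ (τ³/12)(M₂ + 2|δ|M₁ + δ²M₀)`. -/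
theorem ewi_local_error_single_mode
    (δ τ : ℝ) (hτ : 0 < τ) (M₀ M₁ M₂ : ℝ) (G G' G'' : ℝ → ℂ)
    (hG : ∀ s ∈ Set.Icc (0 : ℝ) τ, HasDerivWithinAt G (G' s) (Set.Icc 0 τ) s)
    (hG' : ∀ s ∈ Set.Icc (0 : ℝ) τ, HasDerivWithinAt G' (G'' s) (Set.Icc 0 τ) s)
    (hG'' : ContinuousOn G'' (Set.Icc 0 τ))
    (hb0 : ∀ s ∈ Set.Icc (0 : ℝ) τ, ‖G s‖ ≤ M₀)
    (hb1 : ∀ s ∈ Set.Icc (0 : ℝ) τ, ‖G' s‖ ≤ M₁)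
    (hb2 : ∀ s ∈ Set.Icc (0 : ℝ) τ, ‖G'' s‖ ≤ M₂) :
    ‖(τ / 2 : ℂ) * (G τ + Complex.exp (Complex.I * τ * δ) * G 0)
        - ∫ s in (0 : ℝ)..τ, Complex.exp (Complex.I * (τ - s) * δ) * G s‖
      ≤ (τ ^ 3 / 12) * (M₂ + 2 * |δ| * M₁ + δ ^ 2 * M₀) := by
  have cG : ContinuousOn G (Set.Icc 0 τ) := fun s hs => (hG s hs).continuousWithinAt
  have cG' : ContinuousOn G' (Set.Icc 0 τ) := fun s hs => (hG' s hs).continuousWithinAt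
  have hE : ∀ s : ℝ, HasDerivAt (fun s : ℝ => Complex.exp (Complex.I * (τ - s) * δ))
      (Complex.exp (Complex.I * (τ - s) * δ) * (-(Complex.I * δ))) s := by
    intro s
    have h0 : HasDerivAt (fun s : ℝ => (s : ℂ)) 1 s := Complex.ofRealCLM.hasDerivAt
    refine ((((h0.const_sub (τ : ℂ)).const_mul Complex.I).mul_const (δ : ℂ)).cexp).congr_deriv ?_
    ring
  have hn : ∀ s : ℝ, ‖Complex.exp (Complex.I * (τ - s) * δ)‖ = 1 := by
    intro s
    have : Complex.I * (τ - s) * δ = (((τ - s) * δ : ℝ) : ℂ) * Complex.I := by push_cast; ring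
    rw [this, Complex.norm_exp_ofReal_mul_I]
  have h := trapezoid_aux τ (M₂ + 2 * |δ| * M₁ + δ ^ 2 * M₀) hτ
    (fun s => Complex.exp (Complex.I * (τ - s) * δ) * G s)
    (fun s => Complex.exp (Complex.I * (τ - s) * δ) * (G' s - Complex.I * δ * G s))
    (fun s => Complex.exp (Complex.I * (τ - s) * δ) *
      (G'' s - 2 * Complex.I * δ * G' s - δ ^ 2 * G s))
    (by
      intro s hs
      refine ((hE s).hasDerivWithinAt.mul (hG s hs)).congr_deriv ?_
      ring)
    (by
      intro s hs
      refine ((hE s).hasDerivWithinAt.mul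
        ((hG' s hs).sub ((hG s hs).const_mul (Complex.I * δ)))).congr_deriv ?_
      simp only [Pi.sub_apply]
      linear_combination (Complex.exp (Complex.I * (τ - s) * δ) * δ ^ 2 * G s) * Complex.I_sq)
    (by fun_prop)
    (by
      intro s hs
      rw [norm_mul, hn, one_mul]
      refine (norm_sub_le _ _).trans (add_le_add ((norm_sub_le _ _).trans
        (add_le_add (hb2 s hs) ?_)) ?_)
      · rw [norm_mul]
        have : ‖2 * Complex.I * (δ : ℂ)‖ = 2 * |δ| := by simp
        rw [this]
        exact mul_le_mul_of_nonneg_left (hb1 s hs) (by positivity)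
      · rw [norm_mul]
        have : ‖(δ : ℂ) ^ 2‖ = δ ^ 2 := by simp
        rw [this]
        exact mul_le_mul_of_nonneg_left (hb0 s hs) (by positivity))
  simpa using h
end

section
/- Let b > a be real numbers, β > 0, α ∈ (1,2], τ₀ ∈ (0,1), and γ ∈ (0,1). Set μ_l = 2πl/(b−a) and δ_l = √(β + |μ_l|^α) for l ∈ ℤ, let N₀ = 2⌈1/τ₀⌉ and T_{N₀} = {−N₀/2, −N₀/2 + 1, …, N₀/2 − 1}. If 0 < τ ≤ γ π (b−a)^{α/2} τ₀^{α/2} / (2 √(β τ₀^α (b−a)^α + 2^α π^α (1+τ₀)^α)), then for all l, l₁, l₂, l₃ ∈ T_{N₀}, (τ/2)·|δ_l − δ_{l₁} − δ_{l₂} − δ_{l₃}| ≤ γπ. -/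
open Real

/-- Implication (3.1.29): under the step-size restriction
`0 < τ ≤ γπ(b−a)^{α/2}τ₀^{α/2} / (2√(βτ₀^α(b−a)^α + 2^α π^α (1+τ₀)^α))`,
the accumulated phase per step satisfies
`(τ/2)|δ_l − δ_{l₁} − δ_{l₂} − δ_{l₃}| ≤ γπ` for all low-frequency modes
`l, l₁, l₂, l₃ ∈ T_{N₀}`. -/
theorem phase_per_step_le
    (a b β α τ₀ γ : ℝ) (hab : a < b) (hβ : 0 < β) (hα1 : 1 < α) (hα2 : α ≤ 2)
    (hτ₀0 : 0 < τ₀) (hτ₀1 : τ₀ < 1) (hγ0 : 0 < γ) (hγ1 : γ < 1)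
    (μ : ℤ → ℝ) (hμ : ∀ l : ℤ, μ l = 2 * Real.pi * l / (b - a))
    (δ : ℤ → ℝ) (hδ : ∀ l : ℤ, δ l = Real.sqrt (β + |μ l| ^ α))
    (N₀ : ℤ) (hN₀ : N₀ = 2 * ⌈1 / τ₀⌉)
    (τ : ℝ) (hτ0 : 0 < τ)
    (hτ : τ ≤ γ * Real.pi * (b - a) ^ (α / 2) * τ₀ ^ (α / 2) /
        (2 * Real.sqrt (β * τ₀ ^ α * (b - a) ^ α +
          2 ^ α * Real.pi ^ α * (1 + τ₀) ^ α)))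
    (l l₁ l₂ l₃ : ℤ)
    (hl : -(N₀ / 2) ≤ l ∧ l ≤ N₀ / 2 - 1)
    (hl₁ : -(N₀ / 2) ≤ l₁ ∧ l₁ ≤ N₀ / 2 - 1)
    (hl₂ : -(N₀ / 2) ≤ l₂ ∧ l₂ ≤ N₀ / 2 - 1)
    (hl₃ : -(N₀ / 2) ≤ l₃ ∧ l₃ ≤ N₀ / 2 - 1) :
    (τ / 2) * |δ l - δ l₁ - δ l₂ - δ l₃| ≤ γ * Real.pi := by
  have hL : 0 < b - a := by linarith
  have hpi := Real.pi_pos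
  have hP : 0 < (b - a) ^ (α / 2) := Real.rpow_pos_of_pos hL _
  have hQ : 0 < τ₀ ^ (α / 2) := Real.rpow_pos_of_pos hτ₀0 _
  have hP2 : ((b - a) ^ (α / 2)) ^ 2 = (b - a) ^ α := by
    rw [← Real.rpow_natCast, ← Real.rpow_mul hL.le]
    congr 1
    push_cast
    ring
  have hQ2 : (τ₀ ^ (α / 2)) ^ 2 = τ₀ ^ α := by
    rw [← Real.rpow_natCast, ← Real.rpow_mul hτ₀0.le]
    congr 1
    push_cast
    ring
  have hN : N₀ / 2 = ⌈1 / τ₀⌉ := by omega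
  rw [hN] at hl hl₁ hl₂ hl₃
  have hpos : 0 < β * τ₀ ^ α * (b - a) ^ α + 2 ^ α * Real.pi ^ α * (1 + τ₀) ^ α := by
    positivity
  have hS := Real.sqrt_pos.mpr hpos
  have key : ∀ k : ℤ, (-⌈1 / τ₀⌉ ≤ k ∧ k ≤ ⌈1 / τ₀⌉ - 1) →
      0 ≤ δ k ∧ (b - a) ^ (α / 2) * τ₀ ^ (α / 2) * δ k ≤
        Real.sqrt (β * τ₀ ^ α * (b - a) ^ α + 2 ^ α * Real.pi ^ α * (1 + τ₀) ^ α) := by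
    intro k hk
    rw [hδ k]
    refine ⟨Real.sqrt_nonneg _, Real.le_sqrt_of_sq_le ?_⟩
    have hnn : 0 ≤ β + |μ k| ^ α := by positivity
    rw [mul_pow, mul_pow, Real.sq_sqrt hnn, hP2, hQ2]
    have hk1 : |(k : ℝ)| ≤ (⌈1 / τ₀⌉ : ℝ) := by
      rw [abs_le]
      constructor
      · exact_mod_cast hk.1
      · have : k ≤ ⌈1 / τ₀⌉ := by omega
        exact_mod_cast this
    have hc := (Int.ceil_lt_add_one (1 / τ₀)).le
    have hk2 : τ₀ * |(k : ℝ)| ≤ 1 + τ₀ := by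
      calc τ₀ * |(k : ℝ)| ≤ τ₀ * (1 / τ₀ + 1) := by
            apply mul_le_mul_of_nonneg_left (hk1.trans hc) hτ₀0.le
        _ = 1 + τ₀ := by field_simp
    have hm : (b - a) * τ₀ * |μ k| ≤ 2 * Real.pi * (1 + τ₀) := by
      have : (b - a) * τ₀ * |μ k| = 2 * Real.pi * (τ₀ * |(k : ℝ)|) := by
        rw [hμ k, abs_div, abs_mul, abs_of_pos hL, abs_of_pos (by positivity : 0 < 2 * Real.pi)]
        field_simp
      rw [this]
      exact mul_le_mul_of_nonneg_left hk2 (by positivity)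
    have hm2 := Real.rpow_le_rpow (by positivity) hm (by linarith : 0 ≤ α)
    rw [Real.mul_rpow (by positivity) (by positivity), Real.mul_rpow hL.le hτ₀0.le,
      Real.mul_rpow (by positivity) (by positivity),
      Real.mul_rpow (by positivity) (by positivity)] at hm2
    linarith
  obtain ⟨h0, k0⟩ := key l hl
  obtain ⟨h1, k1⟩ := key l₁ hl₁
  obtain ⟨h2, k2⟩ := key l₂ hl₂
  obtain ⟨h3, k3⟩ := key l₃ hl₃
  rw [le_div_iff₀ (by positivity)] at hτ
  have habs : |δ l - δ l₁ - δ l₂ - δ l₃| ≤ δ l + δ l₁ + δ l₂ + δ l₃ := by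
    rw [abs_le]
    constructor <;> linarith
  generalize (b - a) ^ (α / 2) = P at *
  generalize τ₀ ^ (α / 2) = Q at *
  generalize Real.sqrt (β * τ₀ ^ α * (b - a) ^ α + 2 ^ α * Real.pi ^ α * (1 + τ₀) ^ α) = S at *
  have hPQ : 0 < P * Q := mul_pos hP hQ
  refine le_of_mul_le_mul_left ?_ hPQ
  calc P * Q * (τ / 2 * |δ l - δ l₁ - δ l₂ - δ l₃|)
      = τ / 2 * (P * Q * |δ l - δ l₁ - δ l₂ - δ l₃|) := by ring
    _ ≤ τ / 2 * (P * Q * (δ l + δ l₁ + δ l₂ + δ l₃)) := by gcongr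
    _ ≤ τ / 2 * (4 * S) := by
        apply mul_le_mul_of_nonneg_left _ (by positivity)
        linarith
    _ ≤ P * Q * (γ * Real.pi) := by linarith
end

section
/- Let γ ∈ (0,1) be a fixed constant, let τ > 0 and δ ∈ ℝ satisfy 0 < τ|δ|/2 ≤ γπ, let C₀ ≥ 0, let r ∈ ℂ with |r| ≤ C₀ τ³ δ², and let c : ℕ → ℂ. Then for every n ∈ ℕ with n ≥ 1, |∑_{k=0}^{n} r e^{-ikτδ} c_k| ≤ (2γπ C₀ / sin(γπ)) · τ² |δ| · (∑_{k=0}^{n−1} |c_k − c_{k+1}| + |c_n|). -/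
theorem rco_abel (w c : ℕ → ℂ) (B : ℝ) (hB : ∀ m, ‖∑ k ∈ Finset.range m, w k‖ ≤ B) (n : ℕ) :
    ‖∑ k ∈ Finset.range (n + 1), w k * c k‖
      ≤ B * ((∑ k ∈ Finset.range n, ‖c k - c (k + 1)‖) + ‖c n‖) := by
  have key : ∀ n : ℕ, ∑ k ∈ Finset.range (n + 1), w k * c k
      = (∑ k ∈ Finset.range n, (∑ j ∈ Finset.range (k + 1), w j) * (c k - c (k + 1)))
        + (∑ j ∈ Finset.range (n + 1), w j) * c n := by
    intro n
    induction n with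
    | zero => simp
    | succ n ih =>
      rw [Finset.sum_range_succ, ih, Finset.sum_range_succ (fun k => (∑ j ∈ Finset.range (k + 1), w j) * (c k - c (k + 1))) n,
        Finset.sum_range_succ w (n + 1)]
      ring
  rw [key, mul_add, Finset.mul_sum]
  refine (norm_add_le _ _).trans (add_le_add ((norm_sum_le _ _).trans ?_) ?_)
  · refine Finset.sum_le_sum fun k _ => ?_
    rw [norm_mul]
    exact mul_le_mul_of_nonneg_right (hB _) (norm_nonneg _)
  · rw [norm_mul]
    exact mul_le_mul_of_nonneg_right (hB _) (norm_nonneg _)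

theorem rco_sin (a s : ℝ) (ha : 0 < a) (ha' : a < Real.pi) (hs : 0 < s) (hsa : s ≤ a) :
    s / a * Real.sin a ≤ Real.sin s := by
  have h := strictConcaveOn_sin_Icc.concaveOn.2 ⟨le_rfl, Real.pi_pos.le⟩
    ⟨ha.le, ha'.le⟩
    (sub_nonneg.2 ((div_le_one ha).2 hsa)) (div_nonneg hs.le ha.le) (sub_add_cancel 1 (s / a))
  simp only [smul_eq_mul, Real.sin_zero, mul_zero, zero_add] at h
  rwa [div_mul_cancel₀ _ ha.ne'] at h

/-- Abstract central RCO estimate ((3.1.31) and (3.1.33)): for `γ ∈ (0,1)`,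
`0 < τ|δ|/2 ≤ γπ`, `|r| ≤ C₀ τ³ δ²` and coefficients `c : ℕ → ℂ`, summation by
parts and phase cancellation give, for `n ≥ 1`,
`|∑_{k=0}^{n} r e^{-ikτδ} c_k|
  ≤ (2γπC₀/sin(γπ)) τ² |δ| (∑_{k=0}^{n-1} |c_k − c_{k+1}| + |c_n|)`. -/
theorem rco_summation_by_parts_bound
    (γ : ℝ) (hγ0 : 0 < γ) (hγ1 : γ < 1) (τ δ : ℝ) (hτ : 0 < τ)
    (hlow : 0 < τ * |δ| / 2) (hup : τ * |δ| / 2 ≤ γ * Real.pi)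
    (C₀ : ℝ) (hC₀ : 0 ≤ C₀) (r : ℂ) (hr : ‖r‖ ≤ C₀ * τ ^ 3 * δ ^ 2)
    (c : ℕ → ℂ) (n : ℕ) (hn : 1 ≤ n) :
    ‖∑ k ∈ Finset.range (n + 1), r * Complex.exp (-(Complex.I * k * τ * δ)) * c k‖
      ≤ (2 * γ * Real.pi * C₀ / Real.sin (γ * Real.pi)) * τ ^ 2 * |δ| *
          ((∑ k ∈ Finset.range n, ‖c k - c (k + 1)‖) + ‖c n‖) := by
  have ha : 0 < γ * Real.pi := by positivity
  have ha' : γ * Real.pi < Real.pi := by nlinarith [Real.pi_pos]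
  have hsin : 0 < Real.sin (γ * Real.pi) := Real.sin_pos_of_pos_of_lt_pi ha ha'
  have hs := rco_sin _ _ ha ha' hlow hup
  have hspos : 0 < τ * |δ| / 2 / (γ * Real.pi) * Real.sin (γ * Real.pi) := by positivity
  have hδ : 0 < |δ| := by
    by_contra hcon
    have : |δ| = 0 := le_antisymm (not_lt.1 hcon) (abs_nonneg _)
    simp [this] at hlow
  set z : ℂ := Complex.exp (Complex.I * ((-(τ * δ) : ℝ) : ℂ)) with hz
  have hpow : ∀ k : ℕ, Complex.exp (-(Complex.I * k * τ * δ)) = z ^ k := by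
    intro k
    rw [hz, ← Complex.exp_nat_mul]
    congr 1
    push_cast
    ring
  have hznorm : ‖z‖ = 1 := by
    rw [hz, mul_comm]
    exact Complex.norm_exp_ofReal_mul_I _
  have hz1 : ‖z - 1‖ = 2 * Real.sin (τ * |δ| / 2) := by
    rw [hz, Complex.norm_exp_I_mul_ofReal_sub_one, norm_mul, Real.norm_eq_abs, Real.norm_eq_abs,
      abs_two]
    congr 1
    have h0 : 0 < Real.sin (τ * |δ| / 2) := hspos.trans_le hs
    rcases abs_cases δ with ⟨h, _⟩ | ⟨h, _⟩
    · rw [h] at h0 ⊢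
      rw [show -(τ * δ) / 2 = -(τ * δ / 2) by ring, Real.sin_neg, abs_neg, abs_of_pos h0]
    · rw [h] at h0 ⊢
      rw [show -(τ * δ) / 2 = τ * -δ / 2 by ring, abs_of_pos h0]
  have hzne : z - 1 ≠ 0 := by
    rw [← norm_pos_iff, hz1]
    linarith
  have hS : ∀ m : ℕ, ‖∑ k ∈ Finset.range m, z ^ k‖
      ≤ 1 / (τ * |δ| / 2 / (γ * Real.pi) * Real.sin (γ * Real.pi)) := by
    intro m
    rw [geom_sum_eq (sub_ne_zero.1 hzne), norm_div, hz1]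
    have h2 : ‖z ^ m - 1‖ ≤ 2 := by
      refine (norm_sub_le _ _).trans ?_
      rw [norm_pow, hznorm]
      norm_num
    calc ‖z ^ m - 1‖ / (2 * Real.sin (τ * |δ| / 2))
        ≤ 2 / (2 * (τ * |δ| / 2 / (γ * Real.pi) * Real.sin (γ * Real.pi))) := by gcongr
      _ = _ := by field_simp
  have hB : ∀ m : ℕ, ‖∑ k ∈ Finset.range m, r * Complex.exp (-(Complex.I * k * τ * δ))‖
      ≤ (2 * γ * Real.pi * C₀ / Real.sin (γ * Real.pi)) * τ ^ 2 * |δ| := by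
    intro m
    simp only [hpow]
    rw [← Finset.mul_sum, norm_mul]
    calc _ ≤ (C₀ * τ ^ 3 * δ ^ 2) *
          (1 / (τ * |δ| / 2 / (γ * Real.pi) * Real.sin (γ * Real.pi))) :=
          mul_le_mul hr (hS m) (norm_nonneg _) (by positivity)
      _ = _ := by
          rw [← sq_abs δ]
          field_simp
  exact rco_abel _ c _ hB n
end
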